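/- Let k ≥ 1, let 0 < a_1 < ⋯ < a_k < 1 and 0 < b_1 < ⋯ < b_k < 1 be such that (1−a_s)(1−b_t) < 1/2 for all 1 ≤ s,t ≤ k, and let x_1,…,x_k, y_1,…,y_k : ℕ → ℕ be sequences with x_s(n)/n → a_s and y_t(n)/n → b_t as n → ∞. Then the k×k determinant det( S(n, x_s(n), y_t(n)) )_{1≤s,t≤k} is positive for all sufficiently large n, and (1/n)·log det( S(n, x_s(n), y_t(n)) )_{1≤s,t≤k} converges, as n → ∞, to −∑_{i=1}^{k} log( 2 · a_i^{a_i} · (1−a_i)^{1−a_i} · b_i^{b_i} · (1−b_i)^{1−b_i} ). -/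

import Mathlib

/-!
Write `S(n,x,y)` backwards, as a sum over the distance `j + 1 = n - l` of the index `l` from `n`.
Since `C(m,x) = C(m+1,x) (1 - x/(m+1))`, the ratio `C(n-j,x) / C(n,x)` tends to `(1-a)^j` when
`x/n → a`, and it is at most `(1 - x/n)^j`. With `q = 2 (1-a) (1-b) < 1`, dominated convergence
therefore gives `S(n,x,y) = C(n,x) C(n,y) 2^{-(n+1)} (q/(1-q) + o(1))`
(`tendsto_delannoyPartialSum_div`).

The prefactors are pulled out of the rows and columns of the determinant. What remains converges to
the determinant of `u_s v_t / (1 - u_s v_t)` with `u_s = 2 (1-a_s)` and `v_t = 1-b_t`, a Cauchy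
determinant, which is positive because `u` and `v` are both strictly decreasing
(`cauchyKernel_det_pos`). It contributes nothing to the exponential rate, which is thus that of
`∏_i C(n,x_i) C(n,y_i) 2^{-(n+1)}`; by Stirling's formula `(1/n) log C(n,x)` tends to the binary
entropy of `a` (`tendsto_log_choose_div`).
-/

open Filter Real

/-- The partial sum `S(n,x,y) = ∑_{l=0}^{n−1} C(l,x) C(l,y) 2^{−(l+1)}`. -/
noncomputable def delannoyPartialSum (n x y : ℕ) : ℝ :=
  ∑ l ∈ Finset.range n, (Nat.choose l x : ℝ) * (Nat.choose l y : ℝ) / 2 ^ (l + 1)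

open Topology

/-! ### Positivity of the Cauchy determinant -/

/-- The Cauchy determinant `det (1 / (1 - u_s v_t))` is positive for strictly decreasing `u`
and `v`. Eliminating the first column leaves the Schur complement
`(u_s - u_0)/(1 - u_s v_0) * ((v_t - v_0)/(1 - u_0 v_t)) * (1/(1 - u_s v_t))`, which is a row and
column scaling of a Cauchy matrix of smaller size. -/
lemma cauchyKernel_det_pos (k : ℕ) : ∀ (u v : Fin k → ℝ), StrictAnti u → StrictAnti v →
    (∀ s t, u s * v t < 1) → 0 < (Matrix.of fun s t : Fin k => 1 / (1 - u s * v t)).det := by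
  induction k with
  | zero => intro u v _ _ _; simp
  | succ k ih =>
    intro u v hu hv h
    have hp : ∀ s t, 0 < 1 - u s * v t := fun s t => by linarith [h s t]
    let p : Fin k → ℝ := fun s => (u s.succ - u 0) / (1 - u s.succ * v 0)
    let r : Fin k → ℝ := fun t => (v t.succ - v 0) / (1 - u 0 * v t.succ)
    let c : Fin (k + 1) → ℝ := Fin.cons 0 fun s => (1 - u 0 * v 0) / (1 - u s.succ * v 0)
    let B : Matrix (Fin (k + 1)) (Fin (k + 1)) ℝ := Matrix.of fun s t =>
      1 / (1 - u s * v t) - c s * (1 / (1 - u 0 * v t))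
    have hAB : (Matrix.of fun s t : Fin (k + 1) => 1 / (1 - u s * v t)).det = B.det := by
      refine Matrix.det_eq_of_forall_row_eq_smul_add_const c 0 (by simp [c]) ?_
      intro i j
      simp [B, c]
    have hB0 : ∀ s : Fin k, B s.succ 0 = 0 := by
      intro s
      have h1 := (hp s.succ 0).ne'
      have h2 := (hp 0 0).ne'
      simp only [B, c, Matrix.of_apply, Fin.cons_succ]
      generalize 1 - u s.succ * v 0 = A at *
      generalize 1 - u 0 * v 0 = D at *
      field_simp
      ring
    have hB00 : B 0 0 = 1 / (1 - u 0 * v 0) := by simp [B, c]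
    have hsub : B.submatrix Fin.succ Fin.succ = Matrix.of fun s t => p s *
        (Matrix.of fun s t : Fin k => r t * (Matrix.of fun s t : Fin k =>
          1 / (1 - u s.succ * v t.succ)) s t) s t := by
      ext s t
      have h1 := (hp s.succ 0).ne'
      have h2 := (hp 0 t.succ).ne'
      have h3 := (hp s.succ t.succ).ne'
      simp only [B, c, p, r, Matrix.of_apply, Fin.cons_succ, Matrix.submatrix_apply]
      generalize hA : 1 - u s.succ * v 0 = A at h1 ⊢
      generalize hE : 1 - u 0 * v t.succ = E at h2 ⊢
      generalize hP : 1 - u s.succ * v t.succ = P at h3 ⊢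
      field_simp
      rw [← hA, ← hE, ← hP]
      ring
    have hih := ih (fun s => u s.succ) (fun t => v t.succ)
      (fun i j hij => hu (Fin.succ_lt_succ_iff.mpr hij))
      (fun i j hij => hv (Fin.succ_lt_succ_iff.mpr hij)) (fun s t => h _ _)
    have hpr : 0 < (∏ s, p s) * ∏ s, r s := by
      rw [← Finset.prod_mul_distrib]
      refine Finset.prod_pos fun s _ => mul_pos_of_neg_of_neg ?_ ?_
      · exact div_neg_of_neg_of_pos (by linarith [hu (Fin.succ_pos s)]) (hp _ _)
      · exact div_neg_of_neg_of_pos (by linarith [hv (Fin.succ_pos s)]) (hp _ _)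
    rw [hAB, Matrix.det_succ_column_zero, Fin.sum_univ_succ]
    simp only [hB0, hB00, Fin.succAbove_zero, Fin.val_zero, pow_zero, one_mul, mul_zero, zero_mul,
      Finset.sum_const_zero, add_zero]
    rw [hsub, Matrix.det_mul_column, Matrix.det_mul_row]
    have := one_div_pos.mpr (hp 0 0)
    rw [← mul_assoc (∏ s, p s)]
    exact mul_pos this (mul_pos hpr hih)

/-! ### Ratios of binomial coefficients -/

lemma choose_eq_succ_choose_mul (m x : ℕ) (hx : x ≤ m + 1) :
    (m.choose x : ℝ) = (m + 1).choose x * (1 - x / ((m + 1 : ℕ) : ℝ)) := by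
  have h := Nat.choose_mul_succ_eq m x
  have h2 : (m.choose x : ℝ) * (m + 1) = (m + 1).choose x * ((m + 1 : ℝ) - x) := by
    have := congrArg (Nat.cast (R := ℝ)) h
    push_cast [Nat.cast_sub hx] at this
    exact this
  have h3 : (m + 1 : ℝ) ≠ 0 := by positivity
  push_cast
  field_simp
  linarith

/-- The truncated subtraction is harmless: for `j ≥ n` the left side is `C(0,x) = 0`. -/
lemma choose_sub_le (n x : ℕ) (hx0 : 0 < x) (hxn : x ≤ n) (j : ℕ) :
    ((n - j).choose x : ℝ) ≤ n.choose x * (1 - x / n : ℝ) ^ j := by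
  have hn : (0 : ℝ) < n := by exact_mod_cast hx0.trans_le hxn
  have h0 : (0 : ℝ) ≤ 1 - x / n := by
    rw [sub_nonneg, div_le_one hn]; exact_mod_cast hxn
  induction j with
  | zero => simp
  | succ j ih =>
    by_cases hj : x ≤ n - j
    · obtain ⟨m, hm⟩ : ∃ m, n - j = m + 1 := ⟨n - j - 1, by omega⟩
      have hm' : n - (j + 1) = m := by omega
      rw [hm] at ih hj
      rw [hm', choose_eq_succ_choose_mul m x hj, pow_succ, ← mul_assoc]
      have hmn : ((m + 1 : ℕ) : ℝ) ≤ n := by exact_mod_cast (by omega : m + 1 ≤ n)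
      have hd : (x : ℝ) / n ≤ x / ((m + 1 : ℕ) : ℝ) := by gcongr
      have hd1 : (x : ℝ) / ((m + 1 : ℕ) : ℝ) ≤ 1 := by
        rw [div_le_one (by positivity)]; exact_mod_cast hj
      gcongr
    · rw [Nat.choose_eq_zero_of_lt (by omega)]
      push_cast
      positivity

section Sequence

variable {a : ℝ} {x : ℕ → ℕ}

lemma eventually_pos_of_tendsto_ratio (ha : 0 < a)
    (hx : Tendsto (fun n => (x n : ℝ) / n) atTop (𝓝 a)) : ∀ᶠ n in atTop, 0 < x n := by
  filter_upwards [hx.eventually (lt_mem_nhds ha)] with n hn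
  rcases Nat.eq_zero_or_pos (x n) with h | h
  · simp [h] at hn
  · exact h

/-- The shift by `j` makes room for comparing with `C(n - j, x)`. -/
lemma eventually_add_le_of_tendsto_ratio (ha : a < 1)
    (hx : Tendsto (fun n => (x n : ℝ) / n) atTop (𝓝 a)) (j : ℕ) :
    ∀ᶠ n in atTop, x n + j ≤ n := by
  have hj : Tendsto (fun n : ℕ => (x n : ℝ) / n + (j : ℝ) / n) atTop (𝓝 (a + 0)) :=
    hx.add (tendsto_const_div_atTop_nhds_zero_nat _)
  rw [add_zero] at hj
  filter_upwards [hj.eventually (gt_mem_nhds ha), eventually_gt_atTop 0] with n hn hn0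
  have : (0 : ℝ) < n := by exact_mod_cast hn0
  rw [← add_div, div_lt_one this] at hn
  exact_mod_cast hn.le

lemma tendsto_choose_ratio (ha1 : a < 1)
    (hx : Tendsto (fun n => (x n : ℝ) / n) atTop (𝓝 a)) (j : ℕ) :
    Tendsto (fun n => ((n - j).choose (x n) : ℝ) / n.choose (x n)) atTop (𝓝 ((1 - a) ^ j)) := by
  induction j with
  | zero =>
    simp only [pow_zero]
    refine tendsto_const_nhds.congr' ?_
    filter_upwards [eventually_add_le_of_tendsto_ratio ha1 hx 0] with n hn
    have : (n.choose (x n) : ℝ) ≠ 0 := by exact_mod_cast (Nat.choose_pos hn).ne'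
    simp [this]
  | succ j ih =>
    have hshift : Tendsto (fun n : ℕ => (x n : ℝ) / ((n - j : ℕ) : ℝ)) atTop (𝓝 a) := by
      have h1 : Tendsto (fun n : ℕ => (1 : ℝ) - (j : ℝ) / n) atTop (𝓝 (1 - 0)) :=
        tendsto_const_nhds.sub (tendsto_const_div_atTop_nhds_zero_nat _)
      have h2 := hx.div h1 (by norm_num)
      rw [sub_zero, div_one] at h2
      refine h2.congr' ?_
      filter_upwards [eventually_gt_atTop j] with n hn
      have hn' : (n : ℝ) ≠ 0 := by exact_mod_cast (by omega : n ≠ 0)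
      have hj' : (n : ℝ) - j ≠ 0 := by
        have : (j : ℝ) < n := by exact_mod_cast hn
        linarith
      simp only [Pi.div_apply]
      rw [Nat.cast_sub hn.le]
      field_simp
    rw [pow_succ]
    refine (ih.mul (tendsto_const_nhds.sub hshift)).congr' ?_
    filter_upwards [eventually_add_le_of_tendsto_ratio ha1 hx j, eventually_gt_atTop j] with n hn hnj
    obtain ⟨m, hm⟩ : ∃ m, n - j = m + 1 := ⟨n - j - 1, by omega⟩
    have hm' : n - (j + 1) = m := by omega
    rw [hm', hm, choose_eq_succ_choose_mul m (x n) (by omega)]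
    ring

end Sequence

/-! ### Asymptotics of the partial sums -/

/-- Near the upper end the summands of `S(n,x,y)` form asymptotically a geometric progression of
ratio `2 (1-a) (1-b) < 1`, which dominates the whole sum. -/
lemma tendsto_delannoyPartialSum_div {a b : ℝ} (ha : 0 < a ∧ a < 1) (hb : 0 < b ∧ b < 1)
    (hab : (1 - a) * (1 - b) < 1 / 2) {x y : ℕ → ℕ}
    (hx : Tendsto (fun n => (x n : ℝ) / n) atTop (𝓝 a))
    (hy : Tendsto (fun n => (y n : ℝ) / n) atTop (𝓝 b)) :
    Tendsto (fun n => delannoyPartialSum n (x n) (y n) /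
      (n.choose (x n) * (n.choose (y n) / 2 ^ (n + 1)))) atTop
      (𝓝 (2 * (1 - a) * (1 - b) * (1 / (1 - 2 * (1 - a) * (1 - b))))) := by
  set q : ℝ := 2 * (1 - a) * (1 - b) with hq
  have hq1 : q < 1 := by rw [hq]; linarith
  have hq0 : 0 < q := by
    have := sub_pos.mpr ha.2
    have := sub_pos.mpr hb.2
    positivity
  obtain ⟨ρ, hqρ, hρ1⟩ := exists_between hq1
  have hρ0 : 0 < ρ := hq0.trans hqρ
  let f : ℕ → ℕ → ℝ := fun n j => ((n - (j + 1)).choose (x n) : ℝ) / n.choose (x n) *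
    (((n - (j + 1)).choose (y n) : ℝ) / n.choose (y n)) * 2 ^ (j + 1)
  have hlim : ∀ j, Tendsto (f · j) atTop (𝓝 (q * q ^ j)) := by
    intro j
    have := ((tendsto_choose_ratio ha.2 hx (j + 1)).mul
      (tendsto_choose_ratio hb.2 hy (j + 1))).mul_const ((2 : ℝ) ^ (j + 1))
    convert this using 2
    rw [← pow_succ', hq, ← mul_pow, ← mul_pow]
    ring
  have hbound : ∀ᶠ n in atTop, ∀ j, ‖f n j‖ ≤ ρ ^ (j + 1) := by
    have hr : Tendsto (fun n : ℕ => 2 * (1 - (x n : ℝ) / n) * (1 - (y n : ℝ) / n)) atTop (𝓝 q) :=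
      ((tendsto_const_nhds.sub hx).const_mul 2).mul (tendsto_const_nhds.sub hy)
    filter_upwards [hr.eventually (gt_mem_nhds hqρ), eventually_pos_of_tendsto_ratio ha.1 hx,
      eventually_pos_of_tendsto_ratio hb.1 hy, eventually_add_le_of_tendsto_ratio ha.2 hx 0,
      eventually_add_le_of_tendsto_ratio hb.2 hy 0] with n hn hx0 hy0 hxn hyn j
    rw [add_zero] at hxn hyn
    have hn0 : (0 : ℝ) < n := by exact_mod_cast hx0.trans_le hxn
    have h1 : (0 : ℝ) ≤ 1 - x n / n := by
      rw [sub_nonneg, div_le_one hn0]; exact_mod_cast hxn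
    have h2 : (0 : ℝ) ≤ 1 - y n / n := by
      rw [sub_nonneg, div_le_one hn0]; exact_mod_cast hyn
    have hcx : (0 : ℝ) < n.choose (x n) := by exact_mod_cast Nat.choose_pos hxn
    have hcy : (0 : ℝ) < n.choose (y n) := by exact_mod_cast Nat.choose_pos hyn
    have hfx : ((n - (j + 1)).choose (x n) : ℝ) / n.choose (x n) ≤ (1 - x n / n : ℝ) ^ (j + 1) := by
      rw [div_le_iff₀' hcx]; exact choose_sub_le n (x n) hx0 hxn (j + 1)
    have hfy : ((n - (j + 1)).choose (y n) : ℝ) / n.choose (y n) ≤ (1 - y n / n : ℝ) ^ (j + 1) := by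
      rw [div_le_iff₀' hcy]; exact choose_sub_le n (y n) hy0 hyn (j + 1)
    rw [Real.norm_of_nonneg (by positivity)]
    calc f n j ≤ (1 - x n / n : ℝ) ^ (j + 1) * (1 - y n / n : ℝ) ^ (j + 1) * 2 ^ (j + 1) := by
          simp only [f]; gcongr
      _ = (2 * (1 - (x n : ℝ) / n) * (1 - (y n : ℝ) / n)) ^ (j + 1) := by
          rw [← mul_pow, ← mul_pow]; ring
      _ ≤ ρ ^ (j + 1) := by gcongr
  have hsum : Summable fun j : ℕ => ρ ^ (j + 1) :=
    (summable_nat_add_iff 1).mpr (summable_geometric_of_lt_one hρ0.le hρ1)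
  have hmain := tendsto_tsum_of_dominated_convergence hsum hlim hbound
  rw [tsum_mul_left, tsum_geometric_of_lt_one hq0.le hq1, ← one_div] at hmain
  refine hmain.congr' ?_
  filter_upwards [eventually_pos_of_tendsto_ratio ha.1 hx] with n hx0
  -- For `j ≥ n` the truncated index makes the summand vanish, as `x n > 0`.
  rw [tsum_eq_sum (s := Finset.range n), delannoyPartialSum,
    ← Finset.sum_range_reflect (fun l => (l.choose (x n) : ℝ) * l.choose (y n) / 2 ^ (l + 1)),
    Finset.sum_div]
  · refine Finset.sum_congr rfl fun j hj => ?_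
    have hjn := Finset.mem_range.mp hj
    have e1 : n - 1 - j = n - (j + 1) := by omega
    have e2 : (2 : ℝ) ^ (n + 1) = 2 ^ (n - (j + 1) + 1) * 2 ^ (j + 1) := by
      rw [← pow_add]; congr 1; omega
    have e3 : (2 : ℝ) ^ (n - (j + 1) + 1) ≠ 0 := by positivity
    simp only [f]
    rw [e1, e2]
    field_simp
  · intro j hj
    have hjn : n ≤ j := by simpa using hj
    have e1 : n - (j + 1) = 0 := by omega
    simp [f, e1, Nat.choose_eq_zero_of_lt hx0]

/-! ### Exponential growth rate of binomial coefficients -/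

/-- The error term `log m! - (m log m - m)` in the leading-order form of Stirling's formula. -/
noncomputable def stirlingError (m : ℕ) : ℝ := Real.log m.factorial - (m * Real.log m - m)

lemma tendsto_stirlingError_div :
    Tendsto (fun m : ℕ => stirlingError m / m) atTop (𝓝 0) := by
  have h1 : Tendsto (fun m : ℕ => Real.log (Stirling.stirlingSeq m)) atTop
      (𝓝 (Real.log (√π))) :=
    Stirling.tendsto_stirlingSeq_sqrt_pi.log (by positivity)
  have h2 : Tendsto (fun m : ℕ => Real.log (Stirling.stirlingSeq m) / m) atTop (𝓝 0) :=
    h1.div_atTop tendsto_natCast_atTop_atTop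
  have h3 : Tendsto (fun m : ℕ => Real.log (m : ℝ) / m) atTop (𝓝 0) :=
    (Real.isLittleO_log_id_atTop.tendsto_div_nhds_zero).comp tendsto_natCast_atTop_atTop
  have h4 : Tendsto (fun m : ℕ => Real.log 2 / (m : ℝ)) atTop (𝓝 0) :=
    tendsto_const_div_atTop_nhds_zero_nat _
  have h5 := h2.add ((h4.add h3).const_mul (1 / 2))
  simp only [add_zero, mul_zero] at h5
  refine h5.congr' ?_
  filter_upwards [eventually_gt_atTop 0] with m hm
  have hm' : (m : ℝ) ≠ 0 := by exact_mod_cast hm.ne'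
  rw [Stirling.log_stirlingSeq_formula, Real.log_mul two_ne_zero hm',
    Real.log_div hm' (Real.exp_pos 1).ne', Real.log_exp, stirlingError]
  field_simp
  ring

lemma tendsto_log_choose_div {a : ℝ} (ha : 0 < a ∧ a < 1) {x : ℕ → ℕ}
    (hx : Tendsto (fun n => (x n : ℝ) / n) atTop (𝓝 a)) :
    Tendsto (fun n : ℕ => Real.log (n.choose (x n)) / n) atTop
      (𝓝 (-(a * Real.log a) - (1 - a) * Real.log (1 - a))) := by
  have hcast : Tendsto (fun n : ℕ => (n : ℝ)) atTop atTop := tendsto_natCast_atTop_atTop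
  -- A sequence of indices growing linearly in `n` has Stirling error `o(n)`.
  have herr : ∀ (z : ℕ → ℕ) (c : ℝ), 0 < c → Tendsto (fun n => (z n : ℝ) / n) atTop (𝓝 c) →
      Tendsto (fun n => stirlingError (z n) / n) atTop (𝓝 0) := by
    intro z c hc hz
    have hz' : Tendsto (fun n => (z n : ℝ)) atTop atTop := by
      refine (hz.pos_mul_atTop hc hcast).congr' ?_
      filter_upwards [eventually_gt_atTop 0] with n hn
      have : (n : ℝ) ≠ 0 := by exact_mod_cast hn.ne'
      field_simp
    have hzN : Tendsto z atTop atTop := tendsto_natCast_atTop_iff.mp hz'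
    have := (tendsto_stirlingError_div.comp hzN).mul hz
    rw [zero_mul] at this
    refine this.congr' ?_
    filter_upwards [hzN.eventually_gt_atTop 0] with n hn
    have : (z n : ℝ) ≠ 0 := by exact_mod_cast hn.ne'
    simp only [Function.comp_apply]
    field_simp
  have hle := eventually_add_le_of_tendsto_ratio ha.2 hx 1
  have hw : Tendsto (fun n => ((n - x n : ℕ) : ℝ) / n) atTop (𝓝 (1 - a)) := by
    refine (tendsto_const_nhds.sub hx).congr' ?_
    filter_upwards [hle] with n hn
    have : (n : ℝ) ≠ 0 := by exact_mod_cast (by omega : n ≠ 0)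
    rw [Nat.cast_sub (by omega)]
    field_simp
  have hn1 : Tendsto (fun n : ℕ => (n : ℝ) / n) atTop (𝓝 1) := by
    refine tendsto_const_nhds.congr' ?_
    filter_upwards [eventually_gt_atTop 0] with n hn
    have : (n : ℝ) ≠ 0 := by exact_mod_cast hn.ne'
    field_simp
  have ha' : 0 < 1 - a := sub_pos.mpr ha.2
  have hent := (((hx.mul (hx.log ha.1.ne')).neg.sub (hw.mul (hw.log ha'.ne'))).add
    (((herr (fun n => n) 1 one_pos hn1).sub (herr x a ha.1 hx)).sub
      (herr (fun n => n - x n) (1 - a) ha' hw)))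
  simp only [sub_zero, add_zero] at hent
  refine hent.congr' ?_
  filter_upwards [hle, eventually_pos_of_tendsto_ratio ha.1 hx] with n hn hx0
  have hxn : x n ≤ n := by omega
  have hn0 : (n : ℝ) ≠ 0 := by exact_mod_cast (by omega : n ≠ 0)
  have hx0' : (x n : ℝ) ≠ 0 := by exact_mod_cast hx0.ne'
  have hw0 : ((n - x n : ℕ) : ℝ) ≠ 0 := by exact_mod_cast (by omega : n - x n ≠ 0)
  have hchoose : Real.log (n.choose (x n)) = Real.log n.factorial - Real.log (x n).factorial -
      Real.log (n - x n).factorial := by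
    have hf := fun m : ℕ => (by exact_mod_cast m.factorial_ne_zero : (m.factorial : ℝ) ≠ 0)
    rw [Nat.cast_choose ℝ hxn, Real.log_div (hf _) (mul_ne_zero (hf _) (hf _)),
      Real.log_mul (hf _) (hf _)]
    ring
  rw [hchoose, Real.log_div hx0' hn0, Real.log_div hw0 hn0]
  simp only [stirlingError]
  have hsum : ((n - x n : ℕ) : ℝ) = n - x n := Nat.cast_sub hxn
  generalize Real.log ((n - x n : ℕ) : ℝ) = L
  rw [hsum]
  field_simp
  ring

/-! ### Asymptotics of the determinant -/

/-- Corollary 4.7 of the paper, in tiling-free form: when all segments joining dents cross the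
inscribed circle, the determinant `det(S(n, x_s(n), y_t(n)))_{s,t}` is eventually positive and
`(1/n) log det` converges to `−∑_i log(2 a_i^{a_i} (1−a_i)^{1−a_i} b_i^{b_i} (1−b_i)^{1−b_i})`. -/
theorem det_delannoyPartialSum_log_asymptotics (k : ℕ) (hk : 1 ≤ k)
    (a b : Fin k → ℝ)
    (ha : ∀ s, 0 < a s ∧ a s < 1) (hb : ∀ t, 0 < b t ∧ b t < 1)
    (haMono : StrictMono a) (hbMono : StrictMono b)
    (hcross : ∀ s t, (1 - a s) * (1 - b t) < 1 / 2)
    (x y : Fin k → ℕ → ℕ)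
    (hx : ∀ s, Tendsto (fun n => (x s n : ℝ) / n) atTop (nhds (a s)))
    (hy : ∀ t, Tendsto (fun n => (y t n : ℝ) / n) atTop (nhds (b t))) :
    (∀ᶠ n : ℕ in atTop,
      0 < (Matrix.of fun s t : Fin k => delannoyPartialSum n (x s n) (y t n)).det) ∧
    Tendsto (fun n : ℕ =>
        (1 / (n : ℝ)) *
          Real.log (Matrix.of fun s t : Fin k => delannoyPartialSum n (x s n) (y t n)).det)
      atTop
      (nhds (-∑ i : Fin k,
        Real.log (2 * a i ^ a i * (1 - a i) ^ (1 - a i) * b i ^ b i * (1 - b i) ^ (1 - b i)))) := by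
  let C : (Fin k → ℕ → ℕ) → ℕ → Fin k → ℝ := fun z n s => (n.choose (z s n) : ℝ)
  -- The matrix left after removing the scale of each row and column.
  let R : ℕ → Matrix (Fin k) (Fin k) ℝ := fun n => Matrix.of fun s t =>
    delannoyPartialSum n (x s n) (y t n) / (C x n s * (C y n t / 2 ^ (n + 1)))
  let u : Fin k → ℝ := fun s => 2 * (1 - a s)
  let v : Fin k → ℝ := fun t => 1 - b t
  have huv : ∀ s t, u s * v t < 1 := fun s t => by
    simp only [u, v]; linarith [hcross s t]
  have hu0 : ∀ s, 0 < u s := fun s => by simp only [u]; linarith [(ha s).2]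
  have hv0 : ∀ s, 0 < v s := fun s => by simp only [v]; linarith [(hb s).2]
  let Q : Matrix (Fin k) (Fin k) ℝ := Matrix.of fun s t => u s * (Matrix.of fun s t : Fin k =>
    v t * (Matrix.of fun s t : Fin k => 1 / (1 - u s * v t)) s t) s t
  have hQ : 0 < Q.det := by
    have hdet := cauchyKernel_det_pos k u v
      (fun i j hij => by simp only [u]; linarith [haMono hij])
      (fun i j hij => by simp only [v]; linarith [hbMono hij]) huv
    simp only [Q]
    rw [Matrix.det_mul_column, Matrix.det_mul_row]
    exact mul_pos (Finset.prod_pos fun s _ => hu0 s)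
      (mul_pos (Finset.prod_pos fun s _ => hv0 s) hdet)
  have hRQ : Tendsto R atTop (𝓝 Q) := by
    refine tendsto_pi_nhds.mpr fun s => tendsto_pi_nhds.mpr fun t => ?_
    have h := tendsto_delannoyPartialSum_div (ha s) (hb t) (hcross s t) (hx s) (hy t)
    have hval : Q s t = 2 * (1 - a s) * (1 - b t) * (1 / (1 - 2 * (1 - a s) * (1 - b t))) :=
      mul_assoc (u s) (v t) _ |>.symm
    rw [hval]
    exact h
  have hRdet : Tendsto (fun n => (R n).det) atTop (𝓝 Q.det) :=
    ((continuous_id.matrix_det).tendsto Q).comp hRQ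
  have hRpos : ∀ᶠ n in atTop, 0 < (R n).det := hRdet.eventually (lt_mem_nhds hQ)
  have hCpos : ∀ (z : Fin k → ℕ → ℕ) (c : Fin k → ℝ), (∀ s, 0 < c s ∧ c s < 1) →
      (∀ s, Tendsto (fun n => (z s n : ℝ) / n) atTop (𝓝 (c s))) →
      ∀ᶠ n in atTop, ∀ s, 0 < C z n s := by
    intro z c hc hz
    refine eventually_all.mpr fun s => ?_
    filter_upwards [eventually_add_le_of_tendsto_ratio (hc s).2 (hz s) 0] with n hn
    rw [add_zero] at hn
    simp only [C]
    exact_mod_cast Nat.choose_pos hn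
  have hfactor : ∀ᶠ n in atTop,
      (Matrix.of fun s t : Fin k => delannoyPartialSum n (x s n) (y t n)).det =
        (∏ s, C x n s) * ((∏ t, C y n t / 2 ^ (n + 1)) * (R n).det) := by
    filter_upwards [hCpos x a ha hx, hCpos y b hb hy] with n hCx hCy
    rw [← Matrix.det_mul_row, ← Matrix.det_mul_column]
    congr 1
    ext s t
    have h1 := (hCx s).ne'
    have h2 := (hCy t).ne'
    simp only [R, Matrix.of_apply]
    field_simp
  refine ⟨?_, ?_⟩
  · filter_upwards [hfactor, hRpos, hCpos x a ha hx, hCpos y b hb hy] with n hn hR hCx hCy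
    rw [hn]
    exact mul_pos (Finset.prod_pos fun s _ => hCx s)
      (mul_pos (Finset.prod_pos fun t _ => div_pos (hCy t) (by positivity)) hR)
  · have hlogR : Tendsto (fun n : ℕ => Real.log (R n).det / n) atTop (𝓝 0) :=
      (hRdet.log hQ.ne').div_atTop tendsto_natCast_atTop_atTop
    have hpow : Tendsto (fun n : ℕ => Real.log 2 + Real.log 2 / n) atTop (𝓝 (Real.log 2 + 0)) :=
      tendsto_const_nhds.add (tendsto_const_div_atTop_nhds_zero_nat _)
    have hsum := (tendsto_finsetSum Finset.univ fun (i : Fin k) _ =>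
      ((tendsto_log_choose_div (ha i) (hx i)).add
        (tendsto_log_choose_div (hb i) (hy i))).sub hpow).add hlogR
    have hval : (-∑ i : Fin k,
        Real.log (2 * a i ^ a i * (1 - a i) ^ (1 - a i) * b i ^ b i * (1 - b i) ^ (1 - b i))) =
        ∑ i : Fin k, ((-(a i * Real.log (a i)) - (1 - a i) * Real.log (1 - a i)) +
          (-(b i * Real.log (b i)) - (1 - b i) * Real.log (1 - b i)) - (Real.log 2 + 0)) + 0 := by
      rw [add_zero, ← Finset.sum_neg_distrib]
      refine Finset.sum_congr rfl fun i _ => ?_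
      have h1 := (ha i).1
      have h2 := sub_pos.mpr (ha i).2
      have h3 := (hb i).1
      have h4 := sub_pos.mpr (hb i).2
      have p1 := Real.rpow_pos_of_pos h1 (a i)
      have p2 := Real.rpow_pos_of_pos h2 (1 - a i)
      have p3 := Real.rpow_pos_of_pos h3 (b i)
      have p4 := Real.rpow_pos_of_pos h4 (1 - b i)
      rw [Real.log_mul (by positivity) p4.ne', Real.log_mul (by positivity) p3.ne',
        Real.log_mul (by positivity) p2.ne', Real.log_mul (by positivity) p1.ne',
        Real.log_rpow h1, Real.log_rpow h2, Real.log_rpow h3, Real.log_rpow h4]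
      ring
    rw [hval]
    refine hsum.congr' ?_
    filter_upwards [hfactor, hRpos, hCpos x a ha hx, hCpos y b hb hy, eventually_gt_atTop 0]
      with n hn hR hCx hCy hn0
    have hn0' : (n : ℝ) ≠ 0 := by exact_mod_cast hn0.ne'
    have hD : ∀ t, C y n t / 2 ^ (n + 1) ≠ 0 := fun t => (div_pos (hCy t) (by positivity)).ne'
    rw [hn, Real.log_mul (Finset.prod_ne_zero_iff.mpr fun s _ => (hCx s).ne')
        (mul_ne_zero (Finset.prod_ne_zero_iff.mpr fun t _ => hD t) hR.ne'),
      Real.log_mul (Finset.prod_ne_zero_iff.mpr fun t _ => hD t) hR.ne',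
      Real.log_prod (fun s _ => (hCx s).ne'), Real.log_prod (fun t _ => hD t),
      ← add_assoc, ← Finset.sum_add_distrib, mul_add, Finset.mul_sum]
    congr 1
    · refine Finset.sum_congr rfl fun i _ => ?_
      rw [Real.log_div (hCy i).ne' (by positivity), Real.log_pow]
      simp only [C]
      push_cast
      field_simp
      ring
    · ring
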